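/- For all graded posets P and Q of rank at least 1, the type B quasisymmetric function is multiplicative with respect to the diamond product: F_B(P ◇ Q) = F_B(P) · F_B(Q). -/

import Mathlib

open scoped TensorProduct

noncomputable section

namespace Tcheb

/-! ### The algebra `R⟨a,b⟩` of ab-polynomials -/

/-- Words in the two noncommuting letters `a` (encoded `true`) and `b` (encoded `false`). -/
abbrev ABWord : Type := FreeMonoid Bool

/-- The ring `R⟨a,b⟩` of polynomials in two noncommuting variables `a` and `b`. -/
abbrev AB (R : Type) [CommRing R] : Type := MonoidAlgebra R ABWord

variable (R : Type) [CommRing R]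

/-- The ab-monomial corresponding to a word. -/
def word (l : List Bool) : AB R := MonoidAlgebra.of R ABWord (FreeMonoid.ofList l)

/-- The variable `a`. -/
def av : AB R := word R [true]
/-- The variable `b`. -/
def bv : AB R := word R [false]
/-- `c = a + b`. -/
def cv : AB R := av R + bv R
/-- `d = ab + ba`. -/
def dv : AB R := av R * bv R + bv R * av R
/-- `a - b`. -/
def ev : AB R := av R - bv R

/-- The linear map defined by prescribing values on the basis of ab-monomials. -/
def onBasis {M : Type} [AddCommMonoid M] [Module R M] (f : List Bool → M) :
    AB R →ₗ[R] M :=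
  (Finsupp.lift M R ABWord fun w => f (FreeMonoid.toList w)) ∘ₗ
    (MonoidAlgebra.coeffLinearEquiv R : AB R ≃ₗ[R] (ABWord →₀ R)).toLinearMap

/-- The algebra map `A` with `A(a) = 1`, `A(b) = 0`. -/
def Amap : AB R →ₐ[R] R :=
  MonoidAlgebra.lift R R ABWord (FreeMonoid.lift fun x => if x then (1 : R) else 0)

/-- The coproduct on `R⟨a,b⟩`: on an ab-monomial `u₁ ⋯ u_k` it is
`Σ_{i=1}^k u₁ ⋯ u_{i-1} ⊗ u_{i+1} ⋯ u_k`. -/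
def Delta : AB R →ₗ[R] AB R ⊗[R] AB R :=
  onBasis R fun w => ∑ i ∈ Finset.range w.length,
    word R (w.take i) ⊗ₜ[R] word R (w.drop (i + 1))

/-- The linear map `C(u) = 2·A(u) + Σ_u A(u₍₁₎)·A(u₍₂₎)`. -/
def Cmap : AB R →ₗ[R] R :=
  2 • (Amap R).toLinearMap +
    (LinearMap.mul' R R ∘ₗ
      TensorProduct.map (Amap R).toLinearMap (Amap R).toLinearMap) ∘ₗ Delta R

/-- `κ(u) = A(u)·(a-b)^(deg u)` on homogeneous `u`, extended linearly. -/
def kappa : AB R →ₗ[R] AB R :=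
  onBasis R fun w => Amap R (word R w) • ev R ^ w.length

/-- `ν(u) = C(u)·(a-b)^(deg u)` on homogeneous `u`, extended linearly. -/
def nuMap : AB R →ₗ[R] AB R :=
  onBasis R fun w => Cmap R (word R w) • ev R ^ w.length

end Tcheb

namespace Tcheb

/-- Cutting a word into the list of segments between the (sorted) cut positions. -/
def segments : List Bool → List ℕ → List (List Bool)
  | l, [] => [l]
  | l, i :: rest => l.take i :: segments (l.drop (i + 1)) (rest.map fun j => j - (i + 1))
  termination_by _ cuts => cuts.length
  decreasing_by simp

variable (R : Type) [CommRing R]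

/-- For segments `[s₁, …, s_k]` this is `ν(s₁)·b·ν(s₂)·b ⋯ b·ν(s_{k-1})·b·κ(s_k)`. -/
def chainProd : List (List Bool) → AB R
  | [] => 1
  | [s] => kappa R (word R s)
  | s :: rest => nuMap R (word R s) * bv R * chainProd rest

/-- The Tchebyshev transform (of the first kind) on ab-polynomials:
`T(u) = Σ_{k ≥ 1} Σ_u ν(u₍₁₎)·b·ν(u₍₂₎)·b ⋯ b·ν(u₍ₖ₋₁₎)·b·κ(u₍ₖ₎)`,
where the inner sum is over the `k`-fold coproduct.  On the ab-monomial basis this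
is the sum, over all sets of positions of deleted letters, of the corresponding
products over the resulting segments. -/
def Tmap : AB R →ₗ[R] AB R :=
  onBasis R fun w => ∑ S : Finset (Fin w.length),
    chainProd R (segments w ((S.sort (· ≤ ·)).map Fin.val))

/-- The `ω` map on a word: replace each occurrence of `ab` by `2d` and all
remaining letters by `c`. -/
def omegaWord : List Bool → AB R
  | [] => 1
  | true :: false :: rest => (2 * dv R) * omegaWord rest
  | _ :: rest => cv R * omegaWord rest

/-- The `ω` map of Billera–Ehrenborg–Readdy. -/
def omegaMap : AB R →ₗ[R] AB R := onBasis R fun w => omegaWord R w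

/-- The reversal involution `u ↦ u*` of ab-polynomials. -/
def revMap : AB R →ₗ[R] AB R := onBasis R fun w => word R w.reverse

/-- `H*(1) = 0` and `H*(u·a) = H*(u·b) = u`. -/
def Hstar : AB R →ₗ[R] AB R :=
  onBasis R fun w => if w = [] then 0 else word R w.dropLast

/-- The Tchebyshev transform of the second kind `U(u) = H*(T(u·a))`. -/
def Umap : AB R →ₗ[R] AB R := Hstar R ∘ₗ Tmap R ∘ₗ LinearMap.mulRight R (av R)

/-- `σ(u) = Σ_u κ(u₍₁₎)·b·T(u₍₂₎)`. -/
def sigmaMap : AB R →ₗ[R] AB R :=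
  LinearMap.mul' R (AB R) ∘ₗ
    TensorProduct.map (LinearMap.mulRight R (bv R) ∘ₗ kappa R) (Tmap R) ∘ₗ Delta R

/-! ### Graded posets and the ab-index -/

/-- `rk` is a rank function for a bounded poset: `rk ⊥ = 0` and covers raise rank by one. -/
def IsRankFun (α : Type) [PartialOrder α] [OrderBot α] (rk : α → ℕ) : Prop :=
  rk ⊥ = 0 ∧ ∀ x y : α, x ⋖ y → rk y = rk x + 1

/-- `f` lists the elements of a chain in increasing order with respect to the
strict order relation `lt`. -/
def IsStrictChain {α : Type} (lt : α → α → Prop) {n : ℕ} (f : Fin (n + 1) → α) : Prop :=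
  ∀ i j : Fin (n + 1), i < j → lt (f i) (f j)

/-- The weight of a chain `x₀ < x₁ < ⋯ < x_k`:
`(a-b)^{ρ(x₀,x₁)-1}·b·(a-b)^{ρ(x₁,x₂)-1}·b ⋯ b·(a-b)^{ρ(x_{k-1},x_k)-1}`. -/
def chainWt {α : Type} (rk : α → ℕ) {n : ℕ} (f : Fin (n + 1) → α) : AB R :=
  (List.intersperse (bv R)
    (List.ofFn fun i : Fin n => ev R ^ (rk (f i.succ) - rk (f i.castSucc) - 1))).prod

/-- The ab-index `Ψ` of the graded poset with strict order relation `lt`, rank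
function `rk`, minimum `b` and maximum `t`: the sum of the weights of all chains
from `b` to `t`. -/
def PsiRel {α : Type} (lt : α → α → Prop) (rk : α → ℕ) (b t : α) : AB R :=
  ∑ᶠ (n : ℕ), ∑ᶠ (f : Fin (n + 1) → α)
    (_ : IsStrictChain lt f ∧ f 0 = b ∧ f (Fin.last n) = t), chainWt R rk f

end Tcheb

namespace Tcheb

/-! ### The Tchebyshev transform of a graded poset -/

section TPoset

variable (α : Type) [PartialOrder α] [BoundedOrder α]

/-- The elements `[x,y]` of the Tchebyshev transform: intervals of `P ∪ {-1̂}`,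
i.e. pairs `(x,y)` with `x ∈ P ∪ {-1̂}`, `y ∈ P` and `x < y`. -/
def TPel : Type := {p : WithBot α × α // p.1 < (p.2 : WithBot α)}

/-- The underlying set of the Tchebyshev transform `T(P)`: the intervals `[x,y]`
together with a new maximum element (`none`). -/
def TP : Type := Option (TPel α)

/-- The cover relation of the Tchebyshev transform `T(P)`:
`[x,y] ⋖ [y,w]` and `[x,y] ⋖ [x,w]` whenever `y ⋖ w` in `P`, and `[x,1̂] ⋖ 1̂_{T(P)}`. -/
inductive TPcov : TP α → TP α → Prop
  | up {x : WithBot α} {y w : α} (h1 : x < (y : WithBot α))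
      (h2 : (y : WithBot α) < (w : WithBot α)) (hc : y ⋖ w) :
      TPcov (some ⟨(x, y), h1⟩) (some ⟨((y : WithBot α), w), h2⟩)
  | same {x : WithBot α} {y w : α} (h1 : x < (y : WithBot α))
      (h2 : x < (w : WithBot α)) (hc : y ⋖ w) :
      TPcov (some ⟨(x, y), h1⟩) (some ⟨(x, w), h2⟩)
  | top {x : WithBot α} (h1 : x < ((⊤ : α) : WithBot α)) :
      TPcov (some ⟨(x, (⊤ : α)), h1⟩) none

/-- The strict order relation of `T(P)`, generated by the cover relation. -/
def TPlt : TP α → TP α → Prop := Relation.TransGen (TPcov α)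

/-- The order relation of `T(P)`, generated by the cover relation. -/
def TPle : TP α → TP α → Prop := Relation.ReflTransGen (TPcov α)

/-- The minimum element `[-1̂, 0̂]` of `T(P)`. -/
def TPbot : TP α := some ⟨((⊥ : WithBot α), (⊥ : α)), WithBot.bot_lt_coe _⟩

/-- The maximum element `1̂_{T(P)}` of `T(P)`. -/
def TPtop : TP α := none

/-- The rank function of `T(P)`: `ρ([x,y]) = ρ(y)` and `ρ(1̂_{T(P)}) = ρ(P) + 1`. -/
def TPrk (rk : α → ℕ) : TP α → ℕ
  | some p => rk p.1.2
  | none => rk (⊤ : α) + 1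

theorem TPbot_ne_TPtop : TPbot α ≠ TPtop α := by exact Option.some_ne_none _

/-- The map `z : T(P) → P ∪ {2̂}` with `z([x,y]) = y` and `z(1̂_{T(P)}) = 2̂`. -/
def zmap : TP α → WithTop α
  | some p => (p.1.2 : WithTop α)
  | none => ⊤

/-- The number of elements of the interval `[u,v]` of `P`, for `u, v ∈ P ∪ {2̂}`. -/
def intervalCard (u v : WithTop α) : ℕ :=
  Set.ncard {t : α | u ≤ (t : WithTop α) ∧ (t : WithTop α) ≤ v}

end TPoset

/-! ### The dual diamond product -/

/-- The strict order relation of the dual diamond product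
`P ◇* Q = ((P ∖ {1̂}) × (Q ∖ {1̂})) ∪ {1̂}` (with `none` the new maximum), built from
the order relations `leA, ltA` and `leB, ltB` of the two factors. -/
def dsLT {A B : Type} (leA ltA : A → A → Prop) (leB ltB : B → B → Prop) :
    Option (A × B) → Option (A × B) → Prop
  | some p, some q => (leA p.1 q.1 ∧ leB p.2 q.2) ∧ (ltA p.1 q.1 ∨ ltB p.2 q.2)
  | some _, none => True
  | none, _ => False

/-! ### EL-labelings -/

/-- The list of edge labels along a chain (given as a list of poset elements). -/
def labelsList {α Λ : Type} (lam : α → α → Λ) (l : List α) : List Λ :=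
  (l.zip l.tail).map fun p => lam p.1 p.2

/-- `l` is a maximal (saturated) chain of the interval `[x,y]` with respect to the
cover relation `cov`: it runs from `x` to `y` and every step is a cover. -/
def IsMaxChainList {α : Type} (cov : α → α → Prop) (x y : α) (l : List α) : Prop :=
  l.head? = some x ∧ l.getLast? = some y ∧ l.Chain' cov

/-- An `EL`-labeling of the poset whose cover relation is `cov`, with labels in the
linearly ordered set `(Λ, lle, llt)`: every interval has a unique rising maximal
chain, which moreover is lexicographically least among all maximal chains of the
interval. -/
def IsELLabeling (α Λ : Type) (lle llt : Λ → Λ → Prop)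
    (cov : α → α → Prop) (lam : α → α → Λ) : Prop :=
  ∀ x y : α, Relation.ReflTransGen cov x y →
    ∃ l : List α, (IsMaxChainList cov x y l ∧ (labelsList lam l).Chain' lle) ∧
      (∀ l' : List α, IsMaxChainList cov x y l' →
        (labelsList lam l').Chain' lle → l' = l) ∧
      (∀ l' : List α, IsMaxChainList cov x y l' →
        labelsList lam l = labelsList lam l' ∨
          List.Lex llt (labelsList lam l) (labelsList lam l'))

/-! ### Eulerian posets -/

/-- A graded poset is Eulerian if every nontrivial interval `[x,y]` has the
same number of elements of even rank as of odd rank. -/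
def IsEulerian (α : Type) [PartialOrder α] (rk : α → ℕ) : Prop :=
  ∀ x y : α, x < y →
    Set.ncard {z : α | x ≤ z ∧ z ≤ y ∧ Even (rk z)} =
      Set.ncard {z : α | x ≤ z ∧ z ≤ y ∧ ¬ Even (rk z)}

/-! ### The face lattice of the crosspolytope -/

/-- A face of the `n`-dimensional crosspolytope: a partial sign vector, i.e. the
pair `(S, ε)` of a subset `S ⊆ {1,…,n}` (the set of coordinates where the function
takes a value `some`) together with a sign function `ε` on `S`. -/
def CrossEl (n : ℕ) : Type := Fin n → Option Bool

/-- `(S,ε) ≤ (T,δ)` iff `S ⊆ T` and `δ` restricted to `S` is `ε`. -/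
instance (n : ℕ) : PartialOrder (CrossEl n) where
  le f g := ∀ i s, f i = some s → g i = some s
  le_refl f i s h := h
  le_trans f g h fg gh i s hi := gh i s (fg i s hi)
  le_antisymm f g fg gf := by
    funext i
    cases hf : f i with
    | some s => exact (fg i s hf).symm
    | none =>
      cases hg : g i with
      | some s => exact absurd (gf i s hg) (by simp [hf])
      | none => rfl

/-- The face lattice of the `n`-dimensional crosspolytope: all partial sign
vectors together with a new maximum element. -/
abbrev Cross (n : ℕ) : Type := WithTop (CrossEl n)

/-- The rank function of the face lattice of the crosspolytope:
`ρ(S,ε) = |S|` and the maximum has rank `n + 1`. -/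
def crossRk (n : ℕ) : Cross n → ℕ
  | none => n + 1
  | some f => (Finset.univ.filter fun i : Fin n => (f i).isSome).card

/-- The minimal element (the empty face) of the crosspolytope face lattice. -/
def crossBot (n : ℕ) : Cross n := WithTop.some (fun _ => none)

/-- The maximal element of the crosspolytope face lattice. -/
def crossTop (n : ℕ) : Cross n := ⊤

/-! ### Quasisymmetric functions -/

/-- The monomial quasisymmetric function `M_{(p₁,…,p_k)}`, as a formal power
series in the countably many commuting variables `t₁, t₂, …` (indexed by `ℕ`). -/
def MQ (R : Type) [CommRing R] (ps : List ℕ) : MvPowerSeries ℕ R :=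
  fun m => if ((m.support.sort (· ≤ ·)).map fun i => m i) = ps then 1 else 0

/-- The `t`-part of a monomial in the variables `s` (index `none`) and
`t₁, t₂, …` (indices `some i`). -/
def tpart (m : Option ℕ →₀ ℕ) : ℕ →₀ ℕ :=
  Finsupp.comapDomain some m (Option.some_injective ℕ).injOn

/-- The type B monomial quasisymmetric function `s^p · M_{(p₁,…,p_k)}`, a formal
power series in the variables `s` (index `none`) and `t₁, t₂, …` (indices `some i`). -/
def MB (R : Type) [CommRing R] (p : ℕ) (ps : List ℕ) : MvPowerSeries (Option ℕ) R :=
  fun m => if m none = p ∧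
      (((tpart m).support.sort (· ≤ ·)).map fun i => tpart m i) = ps then 1 else 0

/-- The quasisymmetric function `F(P)` of the graded poset with strict order
relation `lt`, rank function `rk`, minimum `b` and maximum `t`:
`F(P) = Σ_c M_{(ρ(x₀,x₁),…,ρ(x_{k-1},x_k))}` over all chains `c` from `b` to `t`. -/
def FQ (R : Type) [CommRing R] {α : Type} (lt : α → α → Prop) (rk : α → ℕ)
    (b t : α) : MvPowerSeries ℕ R :=
  ∑ᶠ (n : ℕ), ∑ᶠ (f : Fin (n + 1) → α)
    (_ : IsStrictChain lt f ∧ f 0 = b ∧ f (Fin.last n) = t),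
    MQ R (List.ofFn fun i : Fin n => rk (f i.succ) - rk (f i.castSucc))

/-- The type B quasisymmetric function `F_B(P) = Σ_{0̂ < x ≤ 1̂} s^{ρ(x)-1}·F([x,1̂])`,
written as a sum over all chains `0̂ < x₀ < x₁ < ⋯ < x_k = 1̂` of
`s^{ρ(x₀)-1}·M_{(ρ(x₀,x₁),…,ρ(x_{k-1},x_k))}`. -/
def FB (R : Type) [CommRing R] {α : Type} (lt : α → α → Prop) (rk : α → ℕ)
    (b t : α) : MvPowerSeries (Option ℕ) R :=
  ∑ᶠ (n : ℕ), ∑ᶠ (f : Fin (n + 1) → α)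
    (_ : IsStrictChain lt f ∧ lt b (f 0) ∧ f (Fin.last n) = t),
    MB R (rk (f 0) - 1) (List.ofFn fun i : Fin n => rk (f i.succ) - rk (f i.castSucc))

/-! ### Characters and the chain maps -/

/-- A character on `k⟨a,b⟩`: a linear functional which is multiplicative with
respect to Cartesian products of graded posets (of rank at least 1). -/
def IsCharacter (k : Type) [Field k] (G : AB k →ₗ[k] k) : Prop :=
  ∀ (α β : Type) [Fintype α] [Fintype β] [PartialOrder α] [PartialOrder β]
    [BoundedOrder α] [BoundedOrder β], ∀ (rkα : α → ℕ) (rkβ : β → ℕ),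
    IsRankFun α rkα → IsRankFun β rkβ → 1 ≤ rkα ⊤ → 1 ≤ rkβ ⊤ →
    G (PsiRel k (· < ·) (fun p : α × β => rkα p.1 + rkβ p.2)
        ((⊥ : α), (⊥ : β)) ((⊤ : α), (⊤ : β))) =
      G (PsiRel k (· < ·) rkα ⊥ ⊤) * G (PsiRel k (· < ·) rkβ ⊥ ⊤)

/-- The quasisymmetric function image `g̃F(P)` of the chain map of the second kind:
`Σ_c G(Ψ([x₀,x₁])) ⋯ G(Ψ([x_{k-1},x_k])) · M_{(ρ(x₀,x₁),…,ρ(x_{k-1},x_k))}`,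
summed over all chains `c = {b = x₀ < ⋯ < x_k = t}`. -/
def gtF (k : Type) [Field k] (G : AB k →ₗ[k] k) {α : Type} (lt : α → α → Prop)
    (rk : α → ℕ) (b t : α) : MvPowerSeries ℕ k :=
  ∑ᶠ (n : ℕ), ∑ᶠ (f : Fin (n + 1) → α)
    (_ : IsStrictChain lt f ∧ f 0 = b ∧ f (Fin.last n) = t),
    (∏ i : Fin n, G (PsiRel k lt rk (f i.castSucc) (f i.succ))) •
      MQ k (List.ofFn fun i : Fin n => rk (f i.succ) - rk (f i.castSucc))

/-- The type B quasisymmetric function image `gF_B(P) = Σ_{0̂ < x ≤ 1̂}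
s^{ρ(x)-1}·g̃F([x,1̂])` of the chain map of the first kind, written as a sum over
all chains `0̂ < x₀ < ⋯ < x_k = 1̂`. -/
def gFB (k : Type) [Field k] (G : AB k →ₗ[k] k) {α : Type} (lt : α → α → Prop)
    (rk : α → ℕ) (b t : α) : MvPowerSeries (Option ℕ) k :=
  ∑ᶠ (n : ℕ), ∑ᶠ (f : Fin (n + 1) → α)
    (_ : IsStrictChain lt f ∧ lt b (f 0) ∧ f (Fin.last n) = t),
    (∏ i : Fin n, G (PsiRel k lt rk (f i.castSucc) (f i.succ))) •
      MB k (rk (f 0) - 1) (List.ofFn fun i : Fin n => rk (f i.succ) - rk (f i.castSucc))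

/-- The space of homogeneous ab-polynomials of degree `n`. -/
def ABhomog (k : Type) [Field k] (n : ℕ) : Submodule k (AB k) :=
  Submodule.span k {x : AB k | ∃ w : List Bool, w.length = n ∧ x = word k w}

/-!
Only `P ∖ {0̂}` with the shifted rank `r = ρ - 1` matters for `F_B(P)`, and on these data the
diamond product is the cartesian product, with `r` adding up. Spreading the chains out in time
turns `F_B(P)` into the sum of `s ^ r x₀ * ∏ n, tₙ ^ (r xₙ₊₁ - r xₙ)` over all infinite multichains
`x₀ ≤ x₁ ≤ ⋯` in `P ∖ {0̂}` which eventually stay at `1̂`: a chain together with a choice of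
variables `t_{i₁} ⋯ t_{i_k}` in its quasisymmetric function is the multichain which moves exactly
at the times `i₁ < ⋯ < i_k`. A multichain in a product is a pair of multichains, whose monomials
multiply.
-/

/-! ### Enumerators of weighted families -/

section Enumerator

variable (R : Type*) [Semiring R] {σ X Y : Type*}

/-- The generating function `∑ x, ∏ i, X i ^ w x i` of a family of monomials with finite
multiplicities: the coefficient of a monomial counts how often it occurs in the family. -/
def enumerator (w : X → σ →₀ ℕ) : MvPowerSeries σ R :=
  fun m => (Nat.card {x // w x = m} : R)

theorem coeff_enumerator (w : X → σ →₀ ℕ) (m : σ →₀ ℕ) :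
    MvPowerSeries.coeff m (enumerator R w) = (Nat.card {x // w x = m} : R) :=
  rfl

theorem enumerator_comp_equiv (e : X ≃ Y) (w : Y → σ →₀ ℕ) :
    enumerator R (w ∘ e) = enumerator R w := by
  ext m
  simp only [coeff_enumerator]
  exact congrArg Nat.cast (Nat.card_congr (e.subtypeEquiv fun _ => Iff.rfl))

/-- The pairs of total weight `m`, sorted by the weights of the two components. -/
def sigmaAntidiagonalEquiv [DecidableEq σ] (v : X → σ →₀ ℕ) (w : Y → σ →₀ ℕ) (m : σ →₀ ℕ) :
    {p : X × Y // v p.1 + w p.2 = m} ≃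
      Σ a : Finset.HasAntidiagonal.antidiagonal m, {x // v x = a.1.1} × {y // w y = a.1.2} where
  toFun p :=
    ⟨⟨(v p.1.1, w p.1.2), Finset.HasAntidiagonal.mem_antidiagonal.2 p.2⟩,
      ⟨p.1.1, rfl⟩, ⟨p.1.2, rfl⟩⟩
  invFun q := ⟨(q.2.1.1, q.2.2.1), by
    rw [q.2.1.2, q.2.2.2]; exact Finset.HasAntidiagonal.mem_antidiagonal.1 q.1.2⟩
  left_inv _ := rfl
  right_inv := by
    rintro ⟨⟨⟨a, b⟩, _⟩, ⟨x, hx⟩, ⟨y, hy⟩⟩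
    obtain rfl : v x = a := hx
    obtain rfl : w y = b := hy
    rfl

theorem enumerator_prod (v : X → σ →₀ ℕ) (w : Y → σ →₀ ℕ)
    (hv : ∀ m, Finite {x // v x = m}) (hw : ∀ m, Finite {y // w y = m}) :
    enumerator R (fun p : X × Y => v p.1 + w p.2) = enumerator R v * enumerator R w := by
  classical
  ext m
  rw [MvPowerSeries.coeff_mul, ← Finset.sum_coe_sort]
  simp only [coeff_enumerator]
  rw [Nat.card_congr (sigmaAntidiagonalEquiv v w m), Nat.card_sigma]
  simp only [Nat.card_prod, Nat.cast_sum, Nat.cast_mul]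

end Enumerator

/-! ### Counting the elements of a finite set below a given number -/

section CountBelow

variable (S : Finset ℕ)

/-- The number of elements of `S` smaller than `n`, as a monotone step function: composing a
chain indexed by `Fin (#S + 1)` with it spreads the chain out to a sequence which moves exactly
at the times in `S`. -/
def countBelow : ℕ →o Fin (S.card + 1) where
  toFun n := ⟨(S.filter (· < n)).card, Nat.lt_succ_of_le (Finset.card_filter_le _ _)⟩
  monotone' _ _ h :=
    Finset.card_le_card (Finset.monotone_filter_right _ fun _ _ hi => hi.trans_le h)

theorem val_countBelow (n : ℕ) : (countBelow S n : ℕ) = (S.filter (· < n)).card :=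
  rfl

theorem countBelow_zero : countBelow S 0 = 0 :=
  Fin.ext (by simp [val_countBelow])

theorem countBelow_orderEmbOfFin (j : Fin S.card) :
    countBelow S (S.orderEmbOfFin rfl j) = j.castSucc := by
  have filter_eq : S.filter (· < S.orderEmbOfFin rfl j) =
      (Finset.Iio j).map (S.orderEmbOfFin rfl).toEmbedding := by
    conv_lhs => enter [2]; rw [← S.map_orderEmbOfFin_univ rfl]
    rw [Finset.filter_map]
    congr 1
    ext i
    simp
  apply Fin.ext
  simp [val_countBelow, filter_eq]

theorem countBelow_orderEmbOfFin_add_one (j : Fin S.card) :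
    countBelow S (S.orderEmbOfFin rfl j + 1) = j.succ := by
  have filter_eq : S.filter (· < S.orderEmbOfFin rfl j + 1) =
      insert (S.orderEmbOfFin rfl j) (S.filter (· < S.orderEmbOfFin rfl j)) := by
    ext i
    have := S.orderEmbOfFin_mem rfl j
    grind
  have h := congrArg Fin.val (countBelow_orderEmbOfFin S j)
  rw [val_countBelow] at h
  apply Fin.ext
  rw [val_countBelow, filter_eq, Finset.card_insert_of_notMem (by simp), h]
  rfl

variable {S}

theorem exists_orderEmbOfFin_eq {n : ℕ} (hn : n ∈ S) : ∃ j, S.orderEmbOfFin rfl j = n := by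
  rwa [← Set.mem_range, Finset.range_orderEmbOfFin]

theorem countBelow_add_one_eq_iff {n : ℕ} : countBelow S (n + 1) = countBelow S n ↔ n ∉ S := by
  constructor
  · rintro h hn
    obtain ⟨j, rfl⟩ := exists_orderEmbOfFin_eq hn
    rw [countBelow_orderEmbOfFin, countBelow_orderEmbOfFin_add_one] at h
    exact j.castSucc_lt_succ.ne' h
  · intro hn
    have filter_eq : S.filter (· < n + 1) = S.filter (· < n) := by grind
    exact Fin.ext (by rw [val_countBelow, val_countBelow, filter_eq])

theorem eq_of_countBelow_eq {X : Type*} {f : ℕ → X} (hf : ∀ n ∉ S, f (n + 1) = f n) {a b : ℕ}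
    (h : countBelow S a = countBelow S b) : f a = f b := by
  wlog hab : a ≤ b generalizing a b
  · exact (this h.symm (le_of_not_ge hab)).symm
  induction b, hab using Nat.le_induction with
  | base => rfl
  | succ b hab ih =>
    have eq_b : countBelow S a = countBelow S b :=
      le_antisymm ((countBelow S).monotone hab) (h ▸ (countBelow S).monotone b.le_succ)
    rw [ih eq_b, hf b (countBelow_add_one_eq_iff.1 (h.symm.trans eq_b))]

variable (S)

theorem countBelow_surjective : Function.Surjective (countBelow S) := by
  intro j
  cases j using Fin.cases with
  | zero => exact ⟨0, countBelow_zero S⟩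
  | succ j => exact ⟨_, countBelow_orderEmbOfFin_add_one S j⟩

theorem eventually_countBelow_eq_last : ∀ᶠ n in Filter.atTop, countBelow S n = Fin.last S.card := by
  obtain ⟨N, hN⟩ := countBelow_surjective S (Fin.last S.card)
  filter_upwards [Filter.eventually_ge_atTop N] with n hn
  exact top_le_iff.1 (hN.ge.trans ((countBelow S).monotone hn))

end CountBelow

/-! ### Multichains -/

section Multichain

variable {Q Q' : Type*} [Preorder Q] [Preorder Q']

/-- The infinite multichains `x₀ ≤ x₁ ≤ x₂ ≤ ⋯` that eventually stay at `t`. -/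
def multichains (t : Q) : Set (ℕ →o Q) :=
  {x | ∀ᶠ n in Filter.atTop, x n = t}

/-- Multichains in a product are pairs of multichains in the factors. -/
def multichainsProdEquiv (s : Q) (t : Q') : multichains (s, t) ≃ multichains s × multichains t :=
  (OrderHom.prodIso.toEquiv.subtypeEquiv fun x => by
    simp only [multichains, Prod.ext_iff, Set.mem_ofPred_eq, Filter.eventually_and]; rfl).trans
  Equiv.subtypeProdEquivProd

theorem finite_support_steps (r : Q → ℕ) {t : Q} (x : multichains t) :
    (Function.support fun n => r (x.1 (n + 1)) - r (x.1 n)).Finite := by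
  have eventually_zero : ∀ᶠ n in Filter.cofinite, r (x.1 (n + 1)) - r (x.1 n) = 0 := by
    rw [Nat.cofinite_eq_atTop]
    filter_upwards [x.2, (Filter.tendsto_add_atTop_nat 1).eventually x.2] with n hn hn'
    rw [hn, hn', Nat.sub_self]
  exact eventually_zero

/-- The exponent of the monomial `s ^ r x₀ * ∏ n, tₙ ^ (r xₙ₊₁ - r xₙ)` attached to a
multichain. -/
def multichainWeight (r : Q → ℕ) {t : Q} (x : multichains t) : Option ℕ →₀ ℕ :=
  (Finsupp.ofSupportFinite _ (finite_support_steps r x)).optionElim (r (x.1 0))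

theorem multichainWeight_none (r : Q → ℕ) {t : Q} (x : multichains t) :
    multichainWeight r x none = r (x.1 0) :=
  Finsupp.optionElim_apply_none _ _

theorem multichainWeight_some (r : Q → ℕ) {t : Q} (x : multichains t) (n : ℕ) :
    multichainWeight r x (some n) = r (x.1 (n + 1)) - r (x.1 n) :=
  Finsupp.optionElim_apply_some _ _ _

theorem multichainWeight_eq_iff {r : Q → ℕ} {t : Q} {x : multichains t} {m : Option ℕ →₀ ℕ} :
    multichainWeight r x = m ↔
      r (x.1 0) = m none ∧ ∀ n, r (x.1 (n + 1)) - r (x.1 n) = m (some n) := by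
  simp only [Finsupp.ext_iff, Option.forall, multichainWeight_none, multichainWeight_some]

theorem multichainWeight_prod {r : Q → ℕ} {r' : Q' → ℕ} (hr : Monotone r) (hr' : Monotone r')
    {s : Q} {t : Q'} (x : multichains (s, t)) :
    multichainWeight (fun q : Q × Q' => r q.1 + r' q.2) x =
      multichainWeight r (multichainsProdEquiv s t x).1 +
        multichainWeight r' (multichainsProdEquiv s t x).2 := by
  refine multichainWeight_eq_iff.2 ⟨?_, fun n => ?_⟩
  · rw [Finsupp.add_apply, multichainWeight_none, multichainWeight_none]
    rfl
  · rw [Finsupp.add_apply, multichainWeight_some, multichainWeight_some]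
    have hx := x.1.monotone n.le_succ
    exact (tsub_add_tsub_comm (hr hx.1) (hr' hx.2)).symm

end Multichain

/-! ### Chains -/

section Chain

variable {Q : Type*}

/-- The list of increments of `r` along a chain. -/
def chainSteps (r : Q → ℕ) {n : ℕ} (f : Fin (n + 1) → Q) : List ℕ :=
  List.ofFn fun i : Fin n => r (f i.succ) - r (f i.castSucc)

theorem map_sort_support_eq_chainSteps_iff (v : ℕ →₀ ℕ) (r : Q → ℕ)
    (f : Fin (v.support.card + 1) → Q) :
    v.support.sort.map v = chainSteps r f ↔
      ∀ j, r (f j.succ) - r (f j.castSucc) = v (v.support.orderEmbOfFin rfl j) := by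
  rw [← v.support.listMap_orderEmbOfFin_finRange rfl, List.map_map, ← List.ofFn_eq_map,
    chainSteps, List.ofFn_inj, eq_comm, funext_iff]
  rfl

variable [Preorder Q]

/-- The chains `x₀ < x₁ < ⋯ < xₙ` with `xₙ = t`. -/
def chainsTo (n : ℕ) (t : Q) : Set (Fin (n + 1) → Q) :=
  {f | StrictMono f ∧ f (Fin.last n) = t}

theorem chainsTo.le {n : ℕ} {t : Q} {f : Fin (n + 1) → Q} (hf : f ∈ chainsTo n t)
    (i : Fin (n + 1)) : f i ≤ t :=
  hf.2 ▸ hf.1.monotone i.le_last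

theorem finite_chainsTo {t : Q} (ht : (Set.Iic t).Finite) (n : ℕ) : (chainsTo n t).Finite :=
  (Set.Finite.pi' fun _ => ht).subset fun _ hf => chainsTo.le hf

theorem lt_ncard_Iic_of_mem_chainsTo {t : Q} (ht : (Set.Iic t).Finite) {n : ℕ}
    {f : Fin (n + 1) → Q} (hf : f ∈ chainsTo n t) : n < (Set.Iic t).ncard := by
  have range_subset : Set.range f ⊆ Set.Iic t := Set.range_subset_iff.2 (chainsTo.le hf)
  have := Set.ncard_le_ncard range_subset ht
  rw [← Set.image_univ, Set.ncard_image_of_injective _ hf.1.injective] at this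
  simpa [Nat.succ_le_iff] using this

/-- The series `F_B` of the poset obtained from `Q` by adjoining a minimum, in terms of the
shifted rank `r = ρ - 1` on `Q`. -/
def chainSeries (R : Type) [CommRing R] (r : Q → ℕ) (t : Q) : MvPowerSeries (Option ℕ) R :=
  ∑ᶠ (n : ℕ) (f ∈ chainsTo n t), MB R (r (f 0)) (chainSteps r f)

/-- The chains ending in `t` whose monomial `s ^ r x₀ * M_(…)` contains the monomial `m`. -/
def chainsOfWeight (r : Q → ℕ) (t : Q) (m : Option ℕ →₀ ℕ) :
    Set (Fin ((tpart m).support.card + 1) → Q) :=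
  {f ∈ chainsTo _ t | r (f 0) = m none ∧
    ∀ j, r (f j.succ) - r (f j.castSucc) = m (some ((tpart m).support.orderEmbOfFin rfl j))}

variable (R : Type) [CommRing R]

theorem coeff_MB (p : ℕ) (ps : List ℕ) (m : Option ℕ →₀ ℕ) :
    MvPowerSeries.coeff m (MB R p ps) =
      if m none = p ∧ (tpart m).support.sort.map (tpart m) = ps then 1 else 0 :=
  rfl

theorem coeff_chainSeries_eq_finsum (r : Q → ℕ) {t : Q} (ht : (Set.Iic t).Finite)
    (m : Option ℕ →₀ ℕ) :
    MvPowerSeries.coeff m (chainSeries R r t) =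
      ∑ᶠ (n : ℕ) (f ∈ chainsTo n t), MvPowerSeries.coeff m (MB R (r (f 0)) (chainSteps r f)) := by
  have finite_support : (Function.support fun n =>
      ∑ᶠ f ∈ chainsTo n t, MB R (r (f 0)) (chainSteps r f)).Finite := by
    refine (Set.finite_Iio (Set.Iic t).ncard).subset fun n hn => ?_
    obtain ⟨f, hf, -⟩ := exists_ne_zero_of_finsum_mem_ne_zero hn
    exact lt_ncard_Iic_of_mem_chainsTo ht hf
  rw [chainSeries, map_finsum _ finite_support]
  exact finsum_congr fun n =>
    (MvPowerSeries.coeff m).toAddMonoidHom.map_finsum_mem _ (finite_chainsTo ht n)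

theorem coeff_chainSeries (r : Q → ℕ) {t : Q} (ht : (Set.Iic t).Finite) (m : Option ℕ →₀ ℕ) :
    MvPowerSeries.coeff m (chainSeries R r t) = (Nat.card (chainsOfWeight r t m) : R) := by
  have chains_subset : chainsOfWeight r t m ⊆ chainsTo _ t := Set.sep_subset _ _
  have length_eq (n : ℕ) (f : Fin (n + 1) → Q)
      (h : (tpart m).support.sort.map (tpart m) = chainSteps r f) :
      n = (tpart m).support.card := by
    simpa [chainSteps, eq_comm] using congrArg List.length h
  have coeff_eq_indicator (f : Fin ((tpart m).support.card + 1) → Q) (hf : f ∈ chainsTo _ t) :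
      MvPowerSeries.coeff m (MB R (r (f 0)) (chainSteps r f)) =
        (chainsOfWeight r t m).indicator 1 f := by
    classical
    rw [coeff_MB, Set.indicator_apply]
    refine if_congr ?_ rfl rfl
    rw [map_sort_support_eq_chainSteps_iff, eq_comm]
    exact (and_iff_right hf).symm
  rw [coeff_chainSeries_eq_finsum R r ht, finsum_eq_single _ (tpart m).support.card,
    finsum_mem_congr rfl coeff_eq_indicator, finsum_mem_def, Set.indicator_indicator,
    Set.inter_eq_right.2 chains_subset, ← finsum_mem_def,
    finsum_mem_eq_finite_toFinset_sum _ ((finite_chainsTo ht _).subset chains_subset),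
    Nat.card_coe_set_eq,
    Set.ncard_eq_toFinset_card _ ((finite_chainsTo ht _).subset chains_subset)]
  · simp only [Pi.one_apply, Finset.sum_const, nsmul_one]
  · intro n hn
    refine finsum_mem_eq_zero_of_forall_eq_zero fun f _ => ?_
    exact (coeff_MB R _ _ m).trans (if_neg fun h => hn (length_eq n f h.2))

end Chain

/-! ### Chains as multichains -/

section SpreadOut

variable {Q : Type*} [Preorder Q]

/-- The multichain which runs through the chain `f` and moves exactly at the times in `S`. -/
def spreadOut (S : Finset ℕ) {t : Q} {f : Fin (S.card + 1) → Q} (hf : f ∈ chainsTo S.card t) :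
    multichains t :=
  ⟨⟨f ∘ countBelow S, hf.1.monotone.comp (countBelow S).monotone⟩, by
    filter_upwards [eventually_countBelow_eq_last S] with n hn
    exact (congrArg f hn).trans hf.2⟩

theorem multichainWeight_spreadOut {r : Q → ℕ} {t : Q} {m : Option ℕ →₀ ℕ}
    {f : Fin ((tpart m).support.card + 1) → Q} (hf : f ∈ chainsOfWeight r t m) :
    multichainWeight r (spreadOut (tpart m).support hf.1) = m := by
  obtain ⟨-, zero_eq, steps_eq⟩ := hf
  refine multichainWeight_eq_iff.2 ⟨(congrArg (r ∘ f) (countBelow_zero _)).trans zero_eq, ?_⟩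
  intro n
  change r (f (countBelow _ (n + 1))) - r (f (countBelow _ n)) = _
  by_cases hn : n ∈ (tpart m).support
  · obtain ⟨j, rfl⟩ := exists_orderEmbOfFin_eq hn
    rw [countBelow_orderEmbOfFin, countBelow_orderEmbOfFin_add_one, steps_eq]
  · rw [countBelow_add_one_eq_iff.2 hn, Nat.sub_self]
    exact (Finsupp.notMem_support_iff.1 hn).symm

/-- The chain of elements visited by a multichain which moves only at the times in `S`, sampled at
an arbitrary time between any two consecutive moves. -/
def gather (S : Finset ℕ) {t : Q} (x : multichains t) (j : Fin (S.card + 1)) : Q :=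
  x.1 (Function.surjInv (countBelow_surjective S) j)

end SpreadOut

section Correspondence

variable {Q : Type*} [PartialOrder Q]

theorem gather_countBelow {r : Q → ℕ} (hr : StrictMono r) {t : Q} (x : multichains t) (n : ℕ) :
    gather (tpart (multichainWeight r x)).support x (countBelow _ n) = x.1 n := by
  refine eq_of_countBelow_eq (fun i hi => ?_) (Function.surjInv_eq (countBelow_surjective _) _)
  have step_eq_zero : r (x.1 (i + 1)) - r (x.1 i) = 0 := by
    rw [← multichainWeight_some]
    exact Finsupp.notMem_support_iff (f := tpart _).1 hi
  by_contra hne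
  have rank_lt : r (x.1 i) < r (x.1 (i + 1)) := hr ((x.1.monotone i.le_succ).lt_of_ne' hne)
  omega

theorem gather_mem_chainsOfWeight {r : Q → ℕ} (hr : StrictMono r) {t : Q} (x : multichains t) :
    gather (tpart (multichainWeight r x)).support x ∈
      chainsOfWeight r t (multichainWeight r x) := by
  set S := (tpart (multichainWeight r x)).support
  have gather_castSucc (j) : gather S x (Fin.castSucc j) = x.1 (S.orderEmbOfFin rfl j) := by
    rw [← countBelow_orderEmbOfFin, gather_countBelow hr]
  have gather_succ (j) : gather S x (Fin.succ j) = x.1 (S.orderEmbOfFin rfl j + 1) := by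
    rw [← countBelow_orderEmbOfFin_add_one, gather_countBelow hr]
  refine ⟨⟨Fin.strictMono_iff_lt_succ.2 fun j => ?_, ?_⟩, ?_, fun j => ?_⟩
  · have step_ne_zero : multichainWeight r x (some (S.orderEmbOfFin rfl j)) ≠ 0 :=
      Finsupp.mem_support_iff (f := tpart _).1 (S.orderEmbOfFin_mem rfl j)
    rw [gather_castSucc, gather_succ]
    refine (x.1.monotone (Nat.le_succ _)).lt_of_ne fun h => step_ne_zero ?_
    rw [multichainWeight_some, ← h, Nat.sub_self]
  · obtain ⟨n, hn, hn'⟩ := (x.2.and (eventually_countBelow_eq_last S)).exists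
    rw [← hn', gather_countBelow hr, hn]
  · rw [← countBelow_zero, gather_countBelow hr, multichainWeight_none]
  · rw [gather_castSucc, gather_succ, multichainWeight_some]

/-- For a strictly monotone `r`, a multichain is recovered from the chain of elements it visits
and the exponents of its monomial. -/
def chainsOfWeightEquiv {r : Q → ℕ} (hr : StrictMono r) (t : Q) (m : Option ℕ →₀ ℕ) :
    chainsOfWeight r t m ≃ {x : multichains t // multichainWeight r x = m} where
  toFun f := ⟨spreadOut _ f.2.1, multichainWeight_spreadOut f.2⟩
  invFun x := ⟨gather (tpart m).support x.1, by
    obtain ⟨x, rfl⟩ := x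
    exact gather_mem_chainsOfWeight hr x⟩
  left_inv f := Subtype.ext <| funext fun j =>
    congrArg f.1 (Function.surjInv_eq (countBelow_surjective _) j)
  right_inv := by
    rintro ⟨x, rfl⟩
    exact Subtype.ext <| Subtype.ext <| OrderHom.ext _ _ <| funext <| gather_countBelow hr x

theorem finite_multichainWeight_eq {r : Q → ℕ} (hr : StrictMono r) {t : Q}
    (ht : (Set.Iic t).Finite) (m : Option ℕ →₀ ℕ) :
    Finite {x : multichains t // multichainWeight r x = m} :=
  have : Finite (chainsOfWeight r t m) := (finite_chainsTo ht _).subset (Set.sep_subset _ _)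
  .of_equiv _ (chainsOfWeightEquiv hr t m)

variable (R : Type) [CommRing R]

theorem chainSeries_eq_enumerator {r : Q → ℕ} (hr : StrictMono r) {t : Q}
    (ht : (Set.Iic t).Finite) :
    chainSeries R r t = enumerator R (multichainWeight (t := t) r) := by
  ext m
  rw [coeff_chainSeries R r ht, coeff_enumerator, Nat.card_congr (chainsOfWeightEquiv hr t m)]

theorem chainSeries_prod {Q' : Type*} [PartialOrder Q'] {r : Q → ℕ} {r' : Q' → ℕ}
    (hr : StrictMono r) (hr' : StrictMono r') {s : Q} {t : Q'} (hs : (Set.Iic s).Finite)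
    (ht : (Set.Iic t).Finite) :
    chainSeries R (fun q : Q × Q' => r q.1 + r' q.2) (s, t) =
      chainSeries R r s * chainSeries R r' t := by
  have sum_strictMono : StrictMono fun q : Q × Q' => r q.1 + r' q.2 := fun p q h =>
    (Prod.lt_iff.1 h).elim (fun h => add_lt_add_of_lt_of_le (hr h.1) (hr'.monotone h.2))
      fun h => add_lt_add_of_le_of_lt (hr.monotone h.1) (hr' h.2)
  have finite_Iic : (Set.Iic (s, t)).Finite := Set.Iic_prod_eq (s, t) ▸ hs.prod ht
  rw [chainSeries_eq_enumerator R sum_strictMono finite_Iic, chainSeries_eq_enumerator R hr hs,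
    chainSeries_eq_enumerator R hr' ht, ← enumerator_prod R _ _
      (finite_multichainWeight_eq hr hs) (finite_multichainWeight_eq hr' ht),
    ← enumerator_comp_equiv R (multichainsProdEquiv s t)]
  exact congrArg (enumerator R) <| funext <| multichainWeight_prod hr.monotone hr'.monotone

end Correspondence

/-! ### The diamond product -/

section Diamond

variable (R : Type) [CommRing R]

theorem FB_eq_chainSeries {Q γ : Type} [Preorder Q] [Preorder γ] (ι : Q ↪o γ) {b : γ}
    (range_eq : Set.range ι = Set.Ioi b) {rk : γ → ℕ} (one_le_rk : ∀ q, 1 ≤ rk (ι q)) (t : Q) :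
    FB R (· < ·) rk b (ι t) = chainSeries R (fun q => rk (ι q) - 1) t := by
  have bijOn (n : ℕ) : Set.BijOn (fun f : Fin (n + 1) → Q => ι ∘ f) (chainsTo n t)
      {f | IsStrictChain (· < ·) f ∧ b < f 0 ∧ f (Fin.last n) = ι t} := by
    have mem_Ioi (q : Q) : b < ι q := by
      rw [← Set.mem_Ioi, ← range_eq]
      exact Set.mem_range_self q
    refine ⟨fun f hf => ⟨fun i j h => ι.strictMono (hf.1 h), mem_Ioi _, congrArg ι hf.2⟩,
      ι.injective.comp_left.injOn, ?_⟩
    rintro f ⟨strictMono, bot_lt, last_eq⟩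
    have mem_range (i) : f i ∈ Set.range ι :=
      range_eq ▸ bot_lt.trans_le (StrictMono.monotone (fun i j => strictMono i j) i.zero_le)
    choose g hg using mem_range
    obtain rfl : ι ∘ g = f := funext hg
    exact ⟨g, ⟨fun i j h => ι.lt_iff_lt.1 (strictMono i j h), ι.injective last_eq⟩, rfl⟩
  refine finsum_congr fun n => (finsum_mem_eq_of_bijOn _ (bijOn n) fun f _ => ?_).symm
  simp only [chainSteps, Function.comp_apply, Nat.sub_sub_sub_cancel_right (one_le_rk _)]

theorem IsRankFun.strictMono {α : Type} [PartialOrder α] [OrderBot α] [LocallyFiniteOrder α]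
    {rk : α → ℕ} (hrk : IsRankFun α rk) : StrictMono rk :=
  (strictMono_iff_forall_covBy rk).2 fun x y h => (hrk.2 x y h).symm ▸ (rk x).lt_succ_self

theorem one_le_rank {α : Type*} [PartialOrder α] [OrderBot α] {rk : α → ℕ} (hrk : StrictMono rk)
    (x : {x : α // x ≠ ⊥}) : 1 ≤ rk x :=
  (Nat.zero_le _).trans_lt (hrk (bot_lt_iff_ne_bot.2 x.2))

theorem strictMono_rank_sub_one {α : Type*} [PartialOrder α] [OrderBot α] {rk : α → ℕ}
    (hrk : StrictMono rk) : StrictMono fun x : {x : α // x ≠ ⊥} => rk x - 1 :=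
  fun x _ h => Nat.sub_lt_sub_right (one_le_rank hrk x) (hrk h)

theorem FB_eq_chainSeries_ne_bot {α : Type} [PartialOrder α] [OrderBot α] {rk : α → ℕ}
    (hrk : StrictMono rk) (t : {x : α // x ≠ ⊥}) :
    FB R (· < ·) rk ⊥ t.1 = chainSeries R (fun x : {x : α // x ≠ ⊥} => rk x - 1) t :=
  FB_eq_chainSeries R (OrderEmbedding.subtype (· ≠ ⊥))
    (Subtype.range_coe.trans <| Set.ext fun _ => bot_lt_iff_ne_bot.symm) (one_le_rank hrk) t

theorem FB_diamond_eq_chainSeries {α β : Type} [PartialOrder α] [PartialOrder β] [OrderBot α]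
    [OrderBot β] {rkα : α → ℕ} {rkβ : β → ℕ} (hα : StrictMono rkα) (hβ : StrictMono rkβ)
    {rk : WithBot ({x : α // x ≠ ⊥} × {y : β // y ≠ ⊥}) → ℕ}
    (hrk : ∀ p : {x : α // x ≠ ⊥} × {y : β // y ≠ ⊥}, rk p = rkα p.1 + rkβ p.2 - 1)
    (t : {x : α // x ≠ ⊥} × {y : β // y ≠ ⊥}) :
    FB R (· < ·) rk ⊥ t = chainSeries R
      (fun p : {x : α // x ≠ ⊥} × {y : β // y ≠ ⊥} => (rkα p.1 - 1) + (rkβ p.2 - 1)) t := by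
  have rank_eq (p : {x : α // x ≠ ⊥} × {y : β // y ≠ ⊥}) :
      rk p = (rkα p.1 - 1) + (rkβ p.2 - 1) + 1 := by
    have := one_le_rank hα p.1
    have := one_le_rank hβ p.2
    rw [hrk]
    omega
  have one_le (p) : 1 ≤ rk (WithBot.coeOrderHom p) := (rank_eq p).symm ▸ Nat.le_add_left _ _
  refine (FB_eq_chainSeries R WithBot.coeOrderHom WithBot.range_coe one_le t).trans ?_
  exact congrArg (chainSeries R · t) <| funext fun p => congrArg (· - 1) (rank_eq p)

theorem FB_diamond_multiplicative_general {α β : Type} [PartialOrder α] [PartialOrder β]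
    [OrderBot α] [OrderBot β] {rkα : α → ℕ} {rkβ : β → ℕ} (hα : StrictMono rkα)
    (hβ : StrictMono rkβ) {rk : WithBot ({x : α // x ≠ ⊥} × {y : β // y ≠ ⊥}) → ℕ}
    (hrk : ∀ p : {x : α // x ≠ ⊥} × {y : β // y ≠ ⊥}, rk p = rkα p.1 + rkβ p.2 - 1)
    {s : {x : α // x ≠ ⊥}} {t : {y : β // y ≠ ⊥}} (hs : (Set.Iic s).Finite)
    (ht : (Set.Iic t).Finite) :
    FB R (· < ·) rk ⊥ ((s, t) : {x : α // x ≠ ⊥} × {y : β // y ≠ ⊥}) =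
      FB R (· < ·) rkα ⊥ s * FB R (· < ·) rkβ ⊥ t := by
  rw [FB_diamond_eq_chainSeries R hα hβ hrk, FB_eq_chainSeries_ne_bot R hα,
    FB_eq_chainSeries_ne_bot R hβ]
  exact chainSeries_prod R (strictMono_rank_sub_one hα) (strictMono_rank_sub_one hβ) hs ht

end Diamond

theorem FB_diamond_multiplicative
    (α β : Type) [Fintype α] [Fintype β] [PartialOrder α] [PartialOrder β]
    [BoundedOrder α] [BoundedOrder β] (rkα : α → ℕ) (rkβ : β → ℕ)
    (hα : IsRankFun α rkα) (hβ : IsRankFun β rkβ)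
    (h1α : 1 ≤ rkα (⊤ : α)) (h1β : 1 ≤ rkβ (⊤ : β)) :
    FB ℤ (· < ·)
        (fun d : WithBot ({x : α // x ≠ ⊥} × {y : β // y ≠ ⊥}) =>
          match d with
          | none => 0
          | some p => rkα p.1.1 + rkβ p.2.1 - 1)
        (⊥ : WithBot ({x : α // x ≠ ⊥} × {y : β // y ≠ ⊥}))
        ((⟨⟨⊤, by intro hc; rw [hc, hα.1] at h1α; omega⟩,
           ⟨⊤, by intro hc; rw [hc, hβ.1] at h1β; omega⟩⟩ :
          ({x : α // x ≠ ⊥} × {y : β // y ≠ ⊥})) :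
            WithBot ({x : α // x ≠ ⊥} × {y : β // y ≠ ⊥})) =
      FB ℤ (· < ·) rkα (⊥ : α) (⊤ : α) * FB ℤ (· < ·) rkβ (⊥ : β) (⊤ : β) := by
  classical
  let _ : LocallyFiniteOrder α := Fintype.toLocallyFiniteOrder
  let _ : LocallyFiniteOrder β := Fintype.toLocallyFiniteOrder
  exact FB_diamond_multiplicative_general ℤ hα.strictMono hβ.strictMono (fun _ => rfl)
    (Set.toFinite _) (Set.toFinite _)

end Tcheb
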